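/- arXiv:1510.04144 — 5 statements merged into one kernel-verified Lean document; each statement's English description precedes it below -/
import Mathlib

section
/- Let r ≥ 2 and let Γ be the free group of rank r. If Δ₀ is a finitely generated subgroup of Γ, then there exist n ≥ 1 and an injective group homomorphism ρ : Γ → GL(n, ℂ) such that Δ₀ is closed in the Zariski topology associated to ρ; that is, for every γ ∈ Γ with γ ∉ Δ₀ there exists a polynomial P in the n² matrix-entry variables with complex coefficients such that P vanishes at the matrix ρ(δ) for every δ ∈ Δ₀ but P(ρ(γ)) ≠ 0. -/
/-- Evaluate a polynomial in the `n²` matrix-entry variables at a matrix in `GL(n, ℂ)`. -/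
noncomputable def evalAtGL {n : ℕ} (A : GL (Fin n) ℂ)
    (P : MvPolynomial (Fin n × Fin n) ℂ) : ℂ :=
  MvPolynomial.eval (fun p => (A : Matrix (Fin n) (Fin n) ℂ) p.1 p.2) P

/-!
Ping-pong on the projective line gives an injective `σ : F → GL₂(ℂ)` on the free group `F`. Let `F`
act on the cosets of `Δ`, with base point `x₀`, and let `V` be a finite set of cosets containing
`x₀` and every coset visited when spelling out the generators of `Δ` from `x₀`. On `V` each free
generator of `F` acts as a partial injection, which extends to a permutation; label the arrow
`v ↦ v'` by that free generator if it was already there, and by any element of `F` taking `v` to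
`v'` if it was added. Since `F` is free, this defines a homomorphism `Φ` to the wreath product
`F ≀ Perm V`. The element `Φ γ` takes `x₀` to itself with label `γ` exactly when `γ ∈ Δ`: elements
of `Δ` only use the original arrows, while a label always carries its source to its target, so
that label `γ` at `x₀` forces `γ x₀ = x₀`.

Substituting `σ` for the labels turns `Φ` into a representation by block monomial matrices, and in
its direct sum with `σ` the subgroup `Δ` is cut out by the equality of the `(x₀, x₀)` block with
the block `σ`.
-/

open Filter MulAction

universe u

section Schottky

/-- The matrix of the Möbius transformation `z ↦ b - 1 / (z - a)`, which maps the exterior of the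
closed unit disc around `a` into the closed unit disc around `b`. -/
def schottkyMatrix {R : Type*} [CommRing R] (a b : R) : GL (Fin 2) R where
  val := !![b, -a * b - 1; 1, -a]
  inv := !![-a, a * b + 1; -1, b]
  val_inv := by ext i j; fin_cases i <;> fin_cases j <;> simp <;> ring
  inv_val := by ext i j; fin_cases i <;> fin_cases j <;> simp <;> ring

variable {𝕜 : Type u} [NormedField 𝕜]

/-- The closed unit disc around `a`, as a subset of the projective line `𝕜 ∪ {∞}`. -/
def projectiveDisc (a : 𝕜) : Set (OnePoint 𝕜) :=
  (↑) '' Metric.closedBall a 1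

lemma disjoint_projectiveDisc {a b : 𝕜} (hab : 2 < dist a b) :
    Disjoint (projectiveDisc a) (projectiveDisc b) :=
  (Set.disjoint_image_iff OnePoint.coe_injective).2 <|
    Metric.closedBall_disjoint_closedBall (by linarith)

section SMul

variable [DecidableEq 𝕜]

lemma schottkyMatrix_smul_mem_projectiveDisc (a b : 𝕜) {z : OnePoint 𝕜}
    (hz : z ∉ projectiveDisc a) : schottkyMatrix a b • z ∈ projectiveDisc b := by
  induction z using OnePoint.rec with
  | infty => exact ⟨b, by simp, by simp [OnePoint.smul_infty_eq_ite, schottkyMatrix]⟩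
  | coe z =>
    have one_lt_norm : 1 < ‖z - a‖ := by
      simpa [projectiveDisc, dist_eq_norm] using hz
    refine ⟨b - (z - a)⁻¹, ?_, ?_⟩
    · simpa [dist_eq_norm] using inv_le_one_of_one_le₀ one_lt_norm.le
    · have sub_ne : z - a ≠ 0 := norm_pos_iff.1 (one_pos.trans one_lt_norm)
      simp only [OnePoint.smul_some_eq_ite, schottkyMatrix, Matrix.of_apply, Matrix.cons_val',
        Matrix.cons_val_zero, Matrix.cons_val_one, Matrix.cons_val_fin_one, one_mul,
        ← sub_eq_add_neg, if_neg sub_ne, OnePoint.coe_eq_coe]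
      field_simp
      ring

lemma schottkyMatrix_smul_schottkyMatrix_smul (a b : 𝕜) (z : OnePoint 𝕜) :
    schottkyMatrix a b • schottkyMatrix b a • z = z := by
  have mul_eq_neg_one : schottkyMatrix a b * schottkyMatrix b a = -1 := by
    ext i j
    fin_cases i <;> fin_cases j <;> simp [schottkyMatrix] <;> ring
  rw [smul_smul, mul_eq_neg_one]
  cases z <;> simp [OnePoint.smul_infty_eq_ite, OnePoint.smul_some_eq_ite]

lemma schottkyMatrix_inv_smul_mem_projectiveDisc (a b : 𝕜) {z : OnePoint 𝕜}
    (hz : z ∉ projectiveDisc b) : (schottkyMatrix a b)⁻¹ • z ∈ projectiveDisc a := by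
  rw [inv_smul_eq_iff.2 (schottkyMatrix_smul_schottkyMatrix_smul a b z).symm]
  exact schottkyMatrix_smul_mem_projectiveDisc b a hz

end SMul

theorem injective_lift_schottkyMatrix {ι : Type u} [Nontrivial ι] (c : ι ⊕ ι → 𝕜)
    (hc : Pairwise fun x y => 2 < dist (c x) (c y)) :
    Function.Injective
      (FreeGroup.lift fun i => schottkyMatrix (c (.inl i)) (c (.inr i))) := by
  classical
  refine FreeGroup.injective_lift_of_ping_pong (G := GL (Fin 2) 𝕜) _
    (fun i => projectiveDisc (c (.inr i))) (fun i => projectiveDisc (c (.inl i)))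
    (fun i => (Metric.nonempty_closedBall.2 zero_le_one).image _) ?_ ?_ ?_ ?_ ?_
  · exact fun i j hij => disjoint_projectiveDisc (hc (Sum.inr_injective.ne hij))
  · exact fun i j hij => disjoint_projectiveDisc (hc (Sum.inl_injective.ne hij))
  · exact fun i j => disjoint_projectiveDisc (hc Sum.inr_ne_inl)
  · rintro i _ ⟨z, hz, rfl⟩
    exact schottkyMatrix_smul_mem_projectiveDisc _ _ hz
  · rintro i _ ⟨z, hz, rfl⟩
    exact schottkyMatrix_inv_smul_mem_projectiveDisc _ _ hz

end Schottky

theorem exists_injective_freeGroup_hom_GL_two (α : Type*) [Countable α] :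
    ∃ σ : FreeGroup α →* GL (Fin 2) ℂ, Function.Injective σ := by
  obtain ⟨f, hf⟩ := exists_injective_nat α
  let c : ℕ ⊕ ℕ → ℂ := fun x => (3 * Equiv.natSumNatEquivNat x : ℝ)
  have hc : Pairwise fun x y => 2 < dist (c x) (c y) := fun x y hxy => by
    have one_le : 1 ≤ dist (Equiv.natSumNatEquivNat x) (Equiv.natSumNatEquivNat y) :=
      Nat.pairwise_one_le_dist (Equiv.natSumNatEquivNat.injective.ne hxy)
    have dist_eq : dist (c x) (c y) =
        3 * dist (Equiv.natSumNatEquivNat x) (Equiv.natSumNatEquivNat y) := by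
      rw [Complex.isometry_ofReal.dist_eq, ← Nat.dist_cast_real, Real.dist_eq, Real.dist_eq,
        ← mul_sub, abs_mul, abs_of_pos three_pos]
    linarith
  exact ⟨(FreeGroup.lift _).comp (FreeGroup.map f),
    (injective_lift_schottkyMatrix c hc).comp (FreeGroup.map_injective hf)⟩

lemma exists_perm_extending_smul {G X : Type*} [Group G] [MulAction G X]
    (V : Finset X) (g : G) :
    ∃ π : Equiv.Perm V, ∀ v : V, g • (v : X) ∈ V → (π v : X) = g • (v : X) := by
  classical
  let partialShift : {v : V // g • (v : X) ∈ V} ≃ {v : V // g⁻¹ • (v : X) ∈ V} :=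
    { toFun := fun v => ⟨⟨g • (v : X), v.2⟩, by simp⟩
      invFun := fun v => ⟨⟨g⁻¹ • (v : X), v.2⟩, by simp⟩
      left_inv := fun v => by simp
      right_inv := fun v => by simp }
  refine ⟨partialShift.extendSubtype, fun v hv => ?_⟩
  rw [partialShift.extendSubtype_apply_of_mem v hv]
  rfl

/-- The permutational wreath product `G ≀ Perm V`. The `G`-labels are indexed by targets: the
element `w` moves `v` to `w.right v` with label `w.left (w.right v)`. -/
abbrev PermWreath (V G : Type*) [Group G] : Type _ :=
  (V → G) ⋊[mulAutArrow] Equiv.Perm V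

namespace PermWreath

section Sends

variable {V G : Type*} [Group G]

lemma mul_left_apply (w₂ w₁ : PermWreath V G) (u : V) :
    (w₂ * w₁).left u = w₂.left u * w₁.left (w₂.right.symm u) := rfl

lemma inv_left_apply (w : PermWreath V G) (u : V) : w⁻¹.left u = (w.left (w.right u))⁻¹ := rfl

/-- `w` moves `v` to `v'` with label `g`. -/
def Sends (w : PermWreath V G) (v v' : V) (g : G) : Prop :=
  w.right v = v' ∧ w.left v' = g

lemma Sends.one (v : V) : Sends (1 : PermWreath V G) v v 1 := ⟨rfl, rfl⟩

lemma Sends.mul {w₁ w₂ : PermWreath V G} {v₁ v₂ v₃ : V} {g₁ g₂ : G}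
    (h₂ : Sends w₂ v₂ v₃ g₂) (h₁ : Sends w₁ v₁ v₂ g₁) : Sends (w₂ * w₁) v₁ v₃ (g₂ * g₁) := by
  obtain ⟨rfl, rfl⟩ := h₁
  obtain ⟨rfl, rfl⟩ := h₂
  constructor <;> simp [mul_left_apply]

lemma Sends.inv {w : PermWreath V G} {v v' : V} {g : G} (h : Sends w v v' g) :
    Sends w⁻¹ v' v g⁻¹ := by
  obtain ⟨rfl, rfl⟩ := h
  constructor <;> simp [inv_left_apply]

end Sends

section Monomial

variable {V G R : Type*} [Group G] [DecidableEq V] [Fintype V] [Semiring R]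

/-- The representation of `G ≀ Perm V` by monomial matrices over `R` induced by `σ : G →* R`. -/
def monomialMatrix (σ : G →* R) : PermWreath V G →* Matrix V V R where
  toFun w := .of fun u v => if w.right v = u then σ (w.left u) else 0
  map_one' := by
    ext u v
    simp [Matrix.one_apply, eq_comm]
  map_mul' w₂ w₁ := by
    ext u v
    have right_eq_iff (k : V) : w₂.right k = u ↔ k = w₂.right.symm u :=
      (Equiv.eq_symm_apply _).symm
    simp only [Matrix.mul_apply, Matrix.of_apply, mul_left_apply, SemidirectProduct.mul_right,
      Equiv.Perm.mul_apply, right_eq_iff, map_mul, mul_ite, mul_zero, Finset.sum_ite_eq,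
      Finset.mem_univ, if_true]
    split_ifs with h <;> simp [h]

lemma monomialMatrix_apply_eq_iff [Nontrivial R] {σ : G →* R} (hσ : Function.Injective σ)
    {w : PermWreath V G} {v v' : V} {g : G} :
    monomialMatrix σ w v' v = σ g ↔ Sends w v v' g := by
  have map_ne_zero : σ g ≠ 0 := ((Group.isUnit g).map σ).ne_zero
  by_cases h : w.right v = v' <;>
    simp [monomialMatrix, Sends, h, hσ.eq_iff, map_ne_zero.symm]

end Monomial

section Bisections

variable (G : Type*) {X : Type*} [Group G] [MulAction G X]

/-- The elements of `G ≀ Perm V` each of whose labels carries its source to its target under the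
action of `G` on `X ⊇ V`: the bisections of the action groupoid restricted to `V`. -/
def bisections (V : Finset X) : Subgroup (PermWreath V G) where
  carrier := {w | ∀ v : V, w.left (w.right v) • (v : X) = w.right v}
  one_mem' v := one_smul G (v : X)
  mul_mem' {w₂ w₁} h₂ h₁ v := by
    rw [SemidirectProduct.mul_right, mul_left_apply, mul_smul]
    simpa [h₁ v] using h₂ (w₁.right v)
  inv_mem' {w} h v := by
    simpa [inv_left_apply, inv_smul_eq_iff, eq_comm] using h (w.right.symm v)

variable {G}

lemma Sends.smul_eq {V : Finset X} {w : PermWreath V G} (hw : w ∈ bisections G V) {v v' : V}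
    {g : G} (h : Sends w v v' g) : g • (v : X) = v' := by
  obtain ⟨rfl, rfl⟩ := h
  exact hw v

lemma exists_bisection_extending_smul [IsPretransitive G X] (V : Finset X) (g : G) :
    ∃ w : bisections G V, ∀ v v' : V, g • (v : X) = v' → Sends (w : PermWreath V G) v v' g := by
  obtain ⟨π, hπ⟩ := exists_perm_extending_smul V g
  have exists_label (u : V) :
      ∃ h : G, h • (π.symm u : X) = u ∧ (g • (π.symm u : X) = u → h = g) := by
    by_cases hu : g • (π.symm u : X) = u
    · exact ⟨g, hu, fun _ => rfl⟩
    · obtain ⟨h, hh⟩ := exists_smul_eq G (π.symm u : X) (u : X)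
      exact ⟨h, hh, fun hu' => absurd hu' hu⟩
  choose label label_smul label_eq using exists_label
  refine ⟨⟨⟨label, π⟩, fun v => by simpa using label_smul (π v)⟩, fun v v' hv => ?_⟩
  have π_eq : π v = v' := Subtype.ext ((hπ v (hv ▸ v'.2)).trans hv)
  refine ⟨π_eq, label_eq v' ?_⟩
  rwa [← π_eq, Equiv.symm_apply_apply, π_eq]

end Bisections

section FreeGroup

variable {α X : Type*} [MulAction (FreeGroup α) X]

/-- The homomorphism `Φ` extends the partial action on `V` of each free generator. -/
def ExtendsGenerators {V : Finset X} (Φ : FreeGroup α →* bisections (FreeGroup α) V) : Prop :=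
  ∀ (i : α) (v v' : V), FreeGroup.of i • (v : X) = v' →
    Sends (Φ (.of i) : PermWreath V (FreeGroup α)) v v' (.of i)

lemma exists_extendsGenerators [IsPretransitive (FreeGroup α) X] (V : Finset X) :
    ∃ Φ : FreeGroup α →* bisections (FreeGroup α) V, ExtendsGenerators Φ := by
  choose w hw using fun i : α => exists_bisection_extending_smul V (FreeGroup.of i)
  exact ⟨FreeGroup.lift w, fun i v v' h => by simpa using hw i v v' h⟩

lemma eventually_sends (g : FreeGroup α) (x : X) :
    ∀ᶠ V : Finset X in atTop, ∀ Φ : FreeGroup α →* bisections (FreeGroup α) V,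
      ExtendsGenerators Φ → ∀ v v' : V, (v : X) = x → (v' : X) = g • x →
        Sends (Φ g : PermWreath V (FreeGroup α)) v v' g := by
  induction g using FreeGroup.induction_on generalizing x with
  | C1 =>
    refine .of_forall fun V Φ _ v v' hv hv' => ?_
    obtain rfl : v = v' := Subtype.ext (by rw [hv, hv', one_smul])
    simpa using Sends.one v
  | of i => exact .of_forall fun V Φ hΦ v v' hv hv' => hΦ i v v' (by rw [hv, hv'])
  | inv_of i _ =>
    refine .of_forall fun V Φ hΦ v v' hv hv' => ?_
    simpa using (hΦ i v' v (by rw [hv, hv', smul_inv_smul])).inv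
  | mul g h hg hh =>
    filter_upwards [hg (h • x), hh x, eventually_ge_atTop {h • x}]
      with V hgV hhV hV Φ hΦ v v' hv hv'
    let u : V := ⟨h • x, Finset.singleton_subset_iff.1 hV⟩
    simpa using (hgV Φ hΦ u v' rfl (by rw [hv', mul_smul])).mul (hhV Φ hΦ v u hv rfl)

theorem exists_hom_bisections_sends_iff_mem_stabilizer [IsPretransitive (FreeGroup α) X] {x₀ : X}
    (hx₀ : (stabilizer (FreeGroup α) x₀).FG) :
    ∃ (V : Finset X) (v₀ : V) (Φ : FreeGroup α →* bisections (FreeGroup α) V),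
      ∀ γ, Sends (Φ γ : PermWreath V (FreeGroup α)) v₀ v₀ γ ↔ γ ∈ stabilizer (FreeGroup α) x₀ := by
  obtain ⟨S, hS⟩ := hx₀
  obtain ⟨V, hV, sends_of_mem⟩ := ((eventually_ge_atTop {x₀}).and <|
    (eventually_all_finset S).2 fun s _ => eventually_sends s x₀).exists
  obtain ⟨Φ, hΦ⟩ := exists_extendsGenerators (α := α) V
  let v₀ : V := ⟨x₀, Finset.singleton_subset_iff.1 hV⟩
  refine ⟨V, v₀, Φ, fun γ => ⟨fun h => h.smul_eq (Φ γ).2, fun hγ => ?_⟩⟩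
  rw [← hS] at hγ
  induction hγ using Subgroup.closure_induction with
  | mem s hs =>
    have hs₀ : s • x₀ = x₀ := mem_stabilizer_iff.1 (hS ▸ Subgroup.subset_closure hs)
    exact sends_of_mem s hs Φ hΦ v₀ v₀ rfl hs₀.symm
  | one => simpa using Sends.one v₀
  | mul g h _ _ hg hh => simpa using hg.mul hh
  | inv g _ hg => simpa using hg.inv

end FreeGroup

end PermWreath

open PermWreath in
theorem exists_matrix_hom_apply_eq_iff_mem {α R : Type*} [Semiring R] [Nontrivial R]
    {σ : FreeGroup α →* R} (hσ : Function.Injective σ) {Δ : Subgroup (FreeGroup α)}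
    [DecidableEq (FreeGroup α ⧸ Δ)] (hΔ : Δ.FG) :
    ∃ (V : Finset (FreeGroup α ⧸ Δ)) (v₀ : V) (Φ : FreeGroup α →* Matrix V V R),
      ∀ γ, Φ γ v₀ v₀ = σ γ ↔ γ ∈ Δ := by
  have stabilizer_eq : stabilizer (FreeGroup α) ((1 : FreeGroup α) : FreeGroup α ⧸ Δ) = Δ :=
    stabilizer_quotient Δ
  obtain ⟨V, v₀, Φ, hΦ⟩ :=
    exists_hom_bisections_sends_iff_mem_stabilizer (stabilizer_eq.symm ▸ hΔ)
  refine ⟨V, v₀, (monomialMatrix σ).comp ((bisections _ V).subtype.comp Φ), fun γ => ?_⟩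
  exact (monomialMatrix_apply_eq_iff hσ).trans <| (hΦ γ).trans (by rw [stabilizer_eq])

section Zariski

variable {Γ ι κ K : Type*}

/-- The subset `S` of `Γ` is closed in the Zariski topology that `Γ` inherits from the affine
space of matrices through `ρ`. -/
def IsZariskiClosedVia [CommSemiring K] (ρ : Γ → Matrix ι ι K) (S : Set Γ) : Prop :=
  ∀ γ ∉ S, ∃ P : MvPolynomial (ι × ι) K,
    (∀ δ ∈ S, P.eval (fun p => ρ δ p.1 p.2) = 0) ∧ P.eval (fun p => ρ γ p.1 p.2) ≠ 0

lemma IsZariskiClosedVia.reindex [CommSemiring K] {ρ : Γ → Matrix ι ι K} {S : Set Γ}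
    (h : IsZariskiClosedVia ρ S) (e : ι ≃ κ) :
    IsZariskiClosedVia (fun γ => Matrix.reindex e e (ρ γ)) S := by
  intro γ hγ
  obtain ⟨P, hPS, hPγ⟩ := h γ hγ
  have eval_rename (g : Γ) :
      (MvPolynomial.rename (Prod.map e e) P).eval (fun p => Matrix.reindex e e (ρ g) p.1 p.2) =
        P.eval (fun p => ρ g p.1 p.2) := by
    simp [MvPolynomial.eval_rename, Function.comp_def]
  exact ⟨_, fun δ hδ => (eval_rename δ).trans (hPS δ hδ), (eval_rename γ).trans_ne hPγ⟩

lemma isZariskiClosedVia_setOf_submatrix_eq [CommRing K] (ρ : Γ → Matrix ι ι K) (f g : κ → ι) :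
    IsZariskiClosedVia ρ {γ | (ρ γ).submatrix f f = (ρ γ).submatrix g g} := by
  intro γ hγ
  obtain ⟨i, j, hij⟩ : ∃ i j, ρ γ (f i) (f j) ≠ ρ γ (g i) (g j) := by
    by_contra! h
    exact hγ (Matrix.ext h)
  refine ⟨.X (f i, f j) - .X (g i, g j), fun δ hδ => ?_, by simpa [sub_eq_zero] using hij⟩
  simpa [sub_eq_zero] using congr_fun₂ hδ i j

variable [Fintype ι] [DecidableEq ι] [Fintype κ] [DecidableEq κ]

/-- The direct sum of two matrix representations. -/
def blockSum [Monoid Γ] [Semiring K] (ρ : Γ →* Matrix ι ι K) (σ : Γ →* Matrix κ κ K) :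
    Γ →* Matrix (ι ⊕ κ) (ι ⊕ κ) K where
  toFun γ := .fromBlocks (ρ γ) 0 0 (σ γ)
  map_one' := by simp
  map_mul' γ δ := by simp [Matrix.fromBlocks_multiply]

lemma blockSum_injective_of_right [Monoid Γ] [Semiring K] (ρ : Γ →* Matrix ι ι K)
    {σ : Γ →* Matrix κ κ K} (hσ : Function.Injective σ) : Function.Injective (blockSum ρ σ) :=
  fun _ _ h => hσ (Matrix.fromBlocks_inj.1 h).2.2.2

lemma exists_GL_of_isZariskiClosedVia [Nonempty ι] [Group Γ] {ρ : Γ →* Matrix ι ι ℂ}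
    (hρ : Function.Injective ρ) {S : Set Γ} (hS : IsZariskiClosedVia ρ S) :
    ∃ (n : ℕ) (ρ' : Γ →* GL (Fin n) ℂ), 1 ≤ n ∧ Function.Injective ρ' ∧
      ∀ γ ∉ S, ∃ P : MvPolynomial (Fin n × Fin n) ℂ,
        (∀ δ ∈ S, evalAtGL (ρ' δ) P = 0) ∧ evalAtGL (ρ' γ) P ≠ 0 := by
  let e := Fintype.equivFin ι
  let reindexed : Γ →* Matrix (Fin (Fintype.card ι)) (Fin (Fintype.card ι)) ℂ :=
    (Matrix.reindexRingEquiv ℂ e : Matrix ι ι ℂ →* _).comp ρ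
  have reindexed_injective : Function.Injective reindexed :=
    (Matrix.reindexRingEquiv ℂ e).injective.comp hρ
  exact ⟨Fintype.card ι, reindexed.toHomUnits, Fintype.card_pos,
    fun _ _ h => reindexed_injective (congr_arg Units.val h), hS.reindex e⟩

end Zariski

theorem free_subgroup_zariski_closed_general {α : Type*} [Countable α]
    (Δ₀ : Subgroup (FreeGroup α)) (hΔ₀ : Δ₀.FG) :
    ∃ (n : ℕ) (ρ : FreeGroup α →* GL (Fin n) ℂ), 1 ≤ n ∧
      Function.Injective ρ ∧
      ∀ γ : FreeGroup α, γ ∉ Δ₀ →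
        ∃ P : MvPolynomial (Fin n × Fin n) ℂ,
          (∀ δ ∈ Δ₀, evalAtGL (ρ δ) P = 0) ∧ evalAtGL (ρ γ) P ≠ 0 := by
  classical
  obtain ⟨σGL, σGL_injective⟩ := exists_injective_freeGroup_hom_GL_two α
  let σ : FreeGroup α →* Matrix (Fin 2) (Fin 2) ℂ := (Units.coeHom _).comp σGL
  have hσ : Function.Injective σ := Units.val_injective.comp σGL_injective
  obtain ⟨V, v₀, Φ, hΦ⟩ := exists_matrix_hom_apply_eq_iff_mem hσ hΔ₀
  let ρ := blockSum ((Matrix.compRingEquiv V (Fin 2) ℂ).toMonoidHom.comp Φ) σ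
  have closed : IsZariskiClosedVia ρ {γ | Φ γ v₀ v₀ = σ γ} :=
    isZariskiClosedVia_setOf_submatrix_eq ρ (fun i => .inl (v₀, i)) .inr
  simp only [hΦ] at closed
  exact exists_GL_of_isZariskiClosedVia (blockSum_injective_of_right _ hσ) closed

/-- Theorem 1.1 (free case): a finitely generated subgroup of a free group of rank `r ≥ 2`
is closed in the Zariski topology associated to some faithful finite-dimensional
representation. -/
theorem free_subgroup_zariski_closed (r : ℕ) (hr : 2 ≤ r)
    (Δ₀ : Subgroup (FreeGroup (Fin r))) (hΔ₀ : Δ₀.FG) :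
    ∃ (n : ℕ) (ρ : FreeGroup (Fin r) →* GL (Fin n) ℂ), 1 ≤ n ∧
      Function.Injective ρ ∧
      ∀ γ : FreeGroup (Fin r), γ ∉ Δ₀ →
        ∃ P : MvPolynomial (Fin n × Fin n) ℂ,
          (∀ δ ∈ Δ₀, evalAtGL (ρ δ) P = 0) ∧ evalAtGL (ρ γ) P ≠ 0 :=
  free_subgroup_zariski_closed_general Δ₀ hΔ₀
end

section
/- Let Γ be a finitely generated group, Δ₀ a subgroup of Γ, n ≥ 1, and ρ₀ : Γ → GL(n, ℂ) a homomorphism. Suppose that for every finite subset S of Γ \ Δ₀ there exist homomorphisms ρ, ρ' : Γ → GL(n,ℂ) such that ρ(δ) = ρ₀(δ) = ρ'(δ) for every δ ∈ Δ₀ and ρ(γ) ≠ ρ'(γ) for every γ ∈ S. Then there exist homomorphisms ρ, ρ' : Γ → GL(n,ℂ) with ρ(δ) = ρ₀(δ) = ρ'(δ) for every δ ∈ Δ₀ and ρ(γ) ≠ ρ'(γ) for every γ ∈ Γ with γ ∉ Δ₀. -/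
/-!
Let `K` be an algebraically closed field of cardinality greater than `ℵ₀` and `#Γ`, such as `ℂ`.
Choose, for each finite `S ⊆ Γ`, a pair of representations over `K` that differ on `S \ Δ₀`, and
pass to an ultraproduct along an ultrafilter on the finite subsets of `Γ` refining `atTop`. This
gives two representations over an ultrapower `L` of `K` which agree with `ρ₀` on `Δ₀` and differ at
every `γ ∉ Δ₀`. Their entries generate a subfield `F` of `L` of cardinality less than `#K`. The
transcendence degree of `K` over `F ∩ K` is `#K`, so `F` embeds into `K` over `F ∩ K`; applying the
embedding to all entries brings both representations back to `K` without changing their values on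
`Δ₀` or identifying values that differ.
-/

open Cardinal
open Filter (EventuallyEq Germ eventually_all)
open Matrix (GeneralLinearGroup)

section Cardinality

universe u v w

theorem lift_mk_prod_lt {α : Type u} {β : Type v} {κ : Cardinal.{w}} (hκ : ℵ₀ ≤ κ)
    (hα : lift.{w} #α < lift.{u} κ) (hβ : lift.{w} #β < lift.{v} κ) :
    lift.{w} #(α × β) < lift.{max u v} κ := by
  have hα' : lift.{max v w} #α < lift.{max u v} κ := by
    simpa only [lift_lift] using lift_lt.{_, v}.2 hα
  have hβ' : lift.{max u w} #β < lift.{max u v} κ := by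
    simpa only [lift_lift] using lift_lt.{_, u}.2 hβ
  simpa only [mk_prod, lift_mul, lift_lift] using mul_lt_of_lt (aleph0_le_lift.2 hκ) hα' hβ'

theorem lift_mk_lt_of_finite (α : Type u) [Finite α] {κ : Cardinal.{w}} (hκ : ℵ₀ ≤ κ) :
    lift.{w} #α < lift.{u} κ :=
  (lift_lt_aleph0.2 mk_lt_aleph0).trans_le (aleph0_le_lift.2 hκ)

theorem lift_mk_subfield_closure_range_lt {ι : Type u} {L : Type v} [DivisionRing L]
    {κ : Cardinal.{w}} (hκ : ℵ₀ < κ) (hι : lift.{w} #ι < lift.{u} κ) (x : ι → L) :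
    lift.{w} #(Subfield.closure (Set.range x)) < lift.{v} κ := by
  have hrange : lift.{w} #(Set.range x) < lift.{v} κ := by
    have hle : lift.{max u w} #(Set.range x) ≤ lift.{max v w} #ι := by
      simpa only [lift_lift] using lift_le.{w}.2 (mk_range_le_lift (f := x))
    have hlt : lift.{max v w} #ι < lift.{max u v} κ := by
      simpa only [lift_lift] using lift_lt.{_, v}.2 hι
    rw [← lift_lt.{_, u}]
    simpa only [lift_lift] using hle.trans_lt hlt
  calc lift.{w} #(Subfield.closure (Set.range x))
    _ ≤ lift.{w} (max #(Set.range x) ℵ₀) := lift_le.2 (Subfield.cardinalMk_closure_le_max _)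
    _ = max (lift.{w} #(Set.range x)) ℵ₀ := by rw [lift_max, lift_aleph0]
    _ < lift.{v} κ := max_lt hrange (aleph0_lt_lift.2 hκ)

theorem exists_subfield_mem_entries {α : Type u} {L : Type v} [DivisionRing L] {m n : Type*}
    [Finite m] [Finite n] {κ : Cardinal.{w}} (hκ : ℵ₀ < κ) (hα : lift.{w} #α < lift.{u} κ)
    (A : α → Matrix m n L) :
    ∃ F : Subfield L, lift.{w} #F < lift.{v} κ ∧ ∀ a i j, A a i j ∈ F := by
  refine ⟨.closure (Set.range fun p : α × m × n ↦ A p.1 p.2.1 p.2.2), ?_, ?_⟩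
  · refine lift_mk_subfield_closure_range_lt hκ ?_ _
    exact lift_mk_prod_lt hκ.le hα (lift_mk_lt_of_finite (m × n) hκ.le)
  · exact fun a i j ↦ Subfield.subset_closure ⟨(a, i, j), rfl⟩

theorem countable_of_group_fg {Γ : Type*} [Group Γ] (hΓ : Group.FG Γ) : Countable Γ := by
  obtain ⟨α, _, f, hf⟩ := Group.fg_iff_exists_freeGroup_hom_surjective_finite.1 hΓ
  exact hf.countable

end Cardinality

section FieldEmbeddings

universe u v w

theorem trdeg_le_mk (R : Type u) (A : Type v) [CommRing R] [CommRing A] [Algebra R A] :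
    Algebra.trdeg R A ≤ #A :=
  ciSup_le' fun s ↦ mk_set_le s.1

theorem mk_le_trdeg_of_lift_mk_lt {k : Type u} {K : Type v} [Field k] [Field K] [Algebra k K]
    [IsAlgClosed K] (hK : ℵ₀ < #K) (hk : lift.{v} #k < lift.{u} #K) :
    #K ≤ Algebra.trdeg k K := by
  obtain ⟨t, ht⟩ := exists_isTranscendenceBasis k K
  have hmax : lift.{u} #K ≤ max (max (lift.{v} #k) (lift.{u} #t)) ℵ₀ := by
    rw [← lift_umax.{v, u}]
    exact IsAlgClosed.cardinal_le_max_transcendence_basis _ ht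
  have hK' : ℵ₀ < lift.{u} #K := aleph0_lt_lift.2 hK
  rw [← ht.cardinalMk_eq_trdeg, ← lift_le.{u}]
  simpa only [le_max_iff, hk.not_ge, hK'.not_ge, false_or, or_false] using hmax

theorem nonempty_algHom_of_lift_trdeg_le {k : Type u} {F : Type v} {K : Type w}
    [Field k] [Field F] [Field K] [Algebra k F] [Algebra k K] [IsAlgClosed K]
    (htrdeg : lift.{w} (Algebra.trdeg k F) ≤ lift.{v} (Algebra.trdeg k K)) :
    Nonempty (F →ₐ[k] K) := by
  obtain ⟨s, hs⟩ := exists_isTranscendenceBasis k F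
  obtain ⟨t, ht⟩ := exists_isTranscendenceBasis k K
  rw [← hs.cardinalMk_eq_trdeg, ← ht.cardinalMk_eq_trdeg, lift_mk_le'] at htrdeg
  obtain ⟨e⟩ := htrdeg
  let R := Algebra.adjoin k (Set.range ((↑) : s → F))
  let evalBasis : MvPolynomial s k →ₐ[k] K := MvPolynomial.aeval fun x ↦ (e x : K)
  have evalBasis_injective : Function.Injective evalBasis := ht.1.comp e e.injective
  let g : R →ₐ[k] K := evalBasis.comp hs.1.aevalEquiv.symm
  have g_injective : Function.Injective g :=
    evalBasis_injective.comp hs.1.aevalEquiv.symm.injective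
  let : Algebra R K := g.toAlgebra
  have : FaithfulSMul R K := (faithfulSMul_iff_algebraMap_injective R K).2 g_injective
  have : IsScalarTower k R K := .of_algebraMap_eq fun x ↦ (g.commutes x).symm
  have : Algebra.IsAlgebraic R F := hs.isAlgebraic
  exact ⟨(IsAlgClosed.lift (R := R) (S := F) (M := K)).restrictScalars k⟩

theorem nonempty_algHom_of_lift_mk_le {k : Type u} {F : Type v} {K : Type w}
    [Field k] [Field F] [Field K] [Algebra k F] [Algebra k K] [IsAlgClosed K]
    (hK : ℵ₀ < #K) (hk : lift.{w} #k < lift.{u} #K) (hF : lift.{w} #F ≤ lift.{v} #K) :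
    Nonempty (F →ₐ[k] K) := by
  apply nonempty_algHom_of_lift_trdeg_le
  calc lift.{w} (Algebra.trdeg k F)
    _ ≤ lift.{w} #F := lift_le.2 (trdeg_le_mk k F)
    _ ≤ lift.{v} #K := hF
    _ ≤ lift.{v} (Algebra.trdeg k K) := lift_le.2 (mk_le_trdeg_of_lift_mk_lt hK hk)

theorem exists_subfield_ringHom_fixing_base {K : Type u} {L : Type v} [Field K] [IsAlgClosed K]
    [Field L] (hK : ℵ₀ < #K) (c : K →+* L) (F : Subfield L) (hF : lift.{u} #F < lift.{v} #K) :
    ∃ φ : F →+* K, ∀ (x : F) (z : K), (x : L) = c z → φ x = z := by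
  let k : Subfield K := F.comap c
  let cₖ : k →+* F := (c.comp k.subtype).codRestrict F fun x ↦ x.2
  let : Algebra k F := cₖ.toAlgebra
  have hk : #k < #K :=
    lift_lt.1 ((lift_mk_le_lift_mk_of_injective cₖ.injective).trans_lt hF)
  obtain ⟨φ⟩ := nonempty_algHom_of_lift_mk_le (k := k) hK (lift_lt.2 hk) hF.le
  refine ⟨φ, ?_⟩
  rintro ⟨_, hx⟩ z rfl
  exact φ.commutes (⟨z, hx⟩ : k)

end FieldEmbeddings

section GermGL

variable {I R m : Type*} [CommRing R] [Fintype m] [DecidableEq m]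

/-- The germ along `l` of a family of invertible matrices, as an invertible matrix of germs. For an
ultrafilter `l` this is the canonical map from a power of `GL m R` to `GL m` of the ultrapower. -/
noncomputable def germGL (l : Filter I) : (I → GL m R) →* GL m (Germ l R) :=
  (GeneralLinearGroup.map (Germ.coeRingHom l)).comp <|
    (Units.map (Matrix.piRingEquiv.symm : (I → Matrix m m R) ≃+* Matrix m m (I → R))).comp
      MulEquiv.piUnits.symm.toMonoidHom

theorem germGL_eq_germGL_iff {l : Filter I} {g g' : I → GL m R} :
    germGL l g = germGL l g' ↔ g =ᶠ[l] g' := by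
  have hentry (i j : m) : germGL l g i j = germGL l g' i j ↔ ∀ᶠ x in l, g x i j = g' x i j :=
    Germ.coe_eq
  simp only [GeneralLinearGroup.ext_iff, hentry, EventuallyEq, eventually_all]

theorem germGL_const (l : Filter I) (g : GL m R) :
    germGL l (fun _ ↦ g) =
      GeneralLinearGroup.map ((Germ.coeRingHom l).comp (Pi.constRingHom I R)) g :=
  rfl

end GermGL

section Representations

universe u v w x y

variable {m : Type y} [Fintype m] [DecidableEq m]

theorem exists_monoidHom_GL_subring {Γ R : Type*} [Group Γ] [CommRing R] (S : Subring R)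
    (σ : Γ →* GL m R) (hσ : ∀ γ i j, σ γ i j ∈ S) :
    ∃ τ : Γ →* GL m S, (GeneralLinearGroup.map S.subtype).comp τ = σ := by
  let τ : Γ →* Matrix m m S :=
    { toFun γ := .of fun i j ↦ ⟨σ γ i j, hσ γ i j⟩
      map_one' := by
        ext i j
        obtain rfl | hij := eq_or_ne i j <;> simp [*]
      map_mul' γ γ' := by
        ext i j
        simp [Matrix.mul_apply] }
  refine ⟨τ.toHomUnits, ?_⟩
  ext γ i j
  rfl

variable {J : Type u} {Γ : Type v} {K : Type w} [Group Γ] [Field K] [IsAlgClosed K]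

theorem exists_monoidHom_GL_descent {L : Type x} [Field L] (hK : ℵ₀ < #K)
    (hJ : lift.{w} #J < lift.{u} #K) (hΓ : lift.{w} #Γ < lift.{v} #K) (c : K →+* L)
    (σ : J → Γ →* GL m L) :
    ∃ ρ : J → Γ →* GL m K,
      (∀ a γ g, σ a γ = GeneralLinearGroup.map c g → ρ a γ = g) ∧
        ∀ a b γ, ρ a γ = ρ b γ → σ a γ = σ b γ := by
  obtain ⟨F, hF, hσ⟩ := exists_subfield_mem_entries hK (lift_mk_prod_lt hK.le hJ hΓ)
    fun p : J × Γ ↦ (σ p.1 p.2 : Matrix m m L)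
  obtain ⟨φ, hφ⟩ := exists_subfield_ringHom_fixing_base hK c F hF
  choose τ hτ using fun a ↦ exists_monoidHom_GL_subring F.toSubring (σ a) fun γ ↦ hσ (a, γ)
  refine ⟨fun a ↦ (GeneralLinearGroup.map φ).comp (τ a), fun a γ g hg ↦ ?_, fun a b γ hab ↦ ?_⟩
  · rw [← hτ] at hg
    ext i j
    exact hφ _ _ congr($hg i j)
  · have hτab : τ a γ = τ b γ := by
      ext i j
      exact congr(($(φ.injective congr($hab i j)) : L))
    rw [← hτ a, ← hτ b]
    exact congr(GeneralLinearGroup.map F.toSubring.subtype $hτab)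

theorem exists_monoidHom_GL_ultralimit {I : Type x} (l : Ultrafilter I) (hK : ℵ₀ < #K)
    (hJ : lift.{w} #J < lift.{u} #K) (hΓ : lift.{w} #Γ < lift.{v} #K)
    (r : J → I → Γ →* GL m K) :
    ∃ ρ : J → Γ →* GL m K,
      (∀ a γ g, (∀ᶠ i in l, r a i γ = g) → ρ a γ = g) ∧
        ∀ a b γ, ρ a γ = ρ b γ → ∀ᶠ i in l, r a i γ = r b i γ := by
  obtain ⟨ρ, hconst, hinj⟩ := exists_monoidHom_GL_descent hK hJ hΓ
    ((Germ.coeRingHom (l : Filter I)).comp (Pi.constRingHom I K))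
    fun a ↦ (germGL (l : Filter I)).comp (MonoidHom.pi (r a))
  refine ⟨ρ, fun a γ g hg ↦ hconst a γ g ?_, fun a b γ hab ↦ ?_⟩
  · rw [← germGL_const]
    exact germGL_eq_germGL_iff.2 hg
  · exact germGL_eq_germGL_iff.1 (hinj a b γ hab)

theorem distinguished_to_strongly_distinguished_general (hK : ℵ₀ < #K)
    (hΓ : lift.{w} #Γ < lift.{v} #K) (Δ₀ : Set Γ) (ρ₀ : Γ →* GL m K)
    (h : ∀ S : Finset Γ, (∀ γ ∈ S, γ ∉ Δ₀) →
      ∃ ρ ρ' : Γ →* GL m K,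
        (∀ δ ∈ Δ₀, ρ δ = ρ₀ δ ∧ ρ' δ = ρ₀ δ) ∧ ∀ γ ∈ S, ρ γ ≠ ρ' γ) :
    ∃ ρ ρ' : Γ →* GL m K,
      (∀ δ ∈ Δ₀, ρ δ = ρ₀ δ ∧ ρ' δ = ρ₀ δ) ∧ ∀ γ, γ ∉ Δ₀ → ρ γ ≠ ρ' γ := by
  classical
  choose r r' hΔ₀ hne using fun S : Finset Γ ↦ h (S.filter (· ∉ Δ₀)) (by simp)
  let l : Ultrafilter (Finset Γ) := .of Filter.atTop
  obtain ⟨ρ, hconst, hinj⟩ := exists_monoidHom_GL_ultralimit l hK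
    (lift_mk_lt_of_finite (Fin 2) hK.le) hΓ ![r, r']
  refine ⟨ρ 0, ρ 1, fun δ hδ ↦ ⟨?_, ?_⟩, fun γ hγ hργ ↦ ?_⟩
  · exact hconst 0 δ _ (.of_forall fun S ↦ (hΔ₀ S δ hδ).1)
  · exact hconst 1 δ _ (.of_forall fun S ↦ (hΔ₀ S δ hδ).2)
  · have hmem : ∀ᶠ S in (l : Filter (Finset Γ)), γ ∈ S := by
      filter_upwards [Ultrafilter.of_le _ (Filter.eventually_ge_atTop {γ})] with S hS
      exact Finset.singleton_subset_iff.1 hS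
    obtain ⟨S, hγS, hrγ⟩ := (hmem.and (hinj 0 1 γ hργ)).exists
    exact hne S γ (Finset.mem_filter.2 ⟨hγS, hγ⟩) hrγ

end Representations

/-- Lemma 3.2: if `ρ₀` distinguishes `Δ₀` in `Γ` (for every finite subset `S` of
`Γ \ Δ₀` there are two representations agreeing with `ρ₀` on `Δ₀` that differ on all of
`S`), then `ρ₀` strongly distinguishes `Δ₀` in `Γ`. -/
theorem distinguished_to_strongly_distinguished {Γ : Type*} [Group Γ]
    (hΓ : Group.FG Γ) (Δ₀ : Subgroup Γ) (n : ℕ) (hn : 1 ≤ n)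
    (ρ₀ : Γ →* GL (Fin n) ℂ)
    (h : ∀ S : Finset Γ, (∀ γ ∈ S, γ ∉ Δ₀) →
      ∃ ρ ρ' : Γ →* GL (Fin n) ℂ,
        (∀ δ ∈ Δ₀, ρ δ = ρ₀ δ ∧ ρ' δ = ρ₀ δ) ∧ ∀ γ ∈ S, ρ γ ≠ ρ' γ) :
    ∃ ρ ρ' : Γ →* GL (Fin n) ℂ,
      (∀ δ ∈ Δ₀, ρ δ = ρ₀ δ ∧ ρ' δ = ρ₀ δ) ∧ ∀ γ : Γ, γ ∉ Δ₀ → ρ γ ≠ ρ' γ := by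
  have := countable_of_group_fg hΓ
  exact distinguished_to_strongly_distinguished_general (by simp [aleph0_lt_continuum])
    (by simpa using mk_le_aleph0.trans_lt aleph0_lt_continuum) Δ₀ ρ₀ h
end

section
/- Let H and K be groups with H nontrivial, and let Λ = H ∗ K be their free product, with canonical inclusions inl : H → Λ and inr : K → Λ. Then there exists an automorphism ψ of Λ whose set of fixed points is exactly the image of H; that is, for every x ∈ Λ, ψ(x) = x if and only if x lies in the range of inl. -/
open Monoid Monoid.Coprod

/-!
The kernel of the projection `H ∗ K → H` is the free product of the conjugates `h K h⁻¹`, `h ∈ H`,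
so `H ∗ K ≃ (∗_{h ∈ H} K) ⋊ H` with `H` permuting the free factors by left translation of the index.
For `δ ∈ H`, right translation of the index by `δ` commutes with this action, hence induces an
automorphism of the semidirect product that is the identity on `H`; in `H ∗ K` it is `h ↦ h`,
`k ↦ δ k δ⁻¹`. If `δ ≠ 1`, right translation by `δ` moves every index, so it changes the first
letter of every nonempty reduced word: it fixes only `1` in the kernel, and therefore only `H` in
`H ∗ K`.
-/

/-- The free product of copies of `M` indexed by `ι`. Having a single factor type lets a map of
index sets act on it. -/
abbrev FreePower (ι M : Type*) [Monoid M] : Type _ :=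
  CoprodI fun _ : ι => M

namespace FreePower

section Monoid

variable {ι κ μ M : Type*} [Monoid M]

/-- The inclusion of the `i`-th free factor, with the index explicit because it cannot be recovered
from the factor type. -/
abbrev of (i : ι) : M →* FreePower ι M :=
  CoprodI.of (M := fun _ : ι => M) (i := i)

/-- The homomorphism of free powers induced by a map of index sets. -/
def reindex (f : ι → κ) : FreePower ι M →* FreePower κ M :=
  CoprodI.lift fun i => of (f i)

@[simp]
theorem reindex_of (f : ι → κ) (i : ι) (m : M) : reindex f (of i m) = of (f i) m :=
  CoprodI.lift_of (M := fun _ : ι => M) _ m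

theorem reindex_id : reindex id = MonoidHom.id (FreePower ι M) :=
  CoprodI.lift_of'

theorem reindex_comp (g : κ → μ) (f : ι → κ) :
    reindex (M := M) (g ∘ f) = (reindex g).comp (reindex f) := by
  ext i m
  simp

/-- The action of an injective map of index sets on reduced words. Injectivity keeps adjacent
letters in different factors. -/
def mapWord (f : ι → κ) (hf : f.Injective) (w : CoprodI.Word fun _ : ι => M) :
    CoprodI.Word fun _ : κ => M where
  toList := w.toList.map (Sigma.map f fun _ => id)
  ne_one := by
    intro l hl
    obtain ⟨a, ha, rfl⟩ := List.mem_map.1 hl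
    exact w.ne_one a ha
  chain_ne := by
    rw [List.isChain_map]
    exact w.chain_ne.imp fun _ _ hab => hf.ne hab

theorem prod_mapWord (f : ι → κ) (hf : f.Injective) (w : CoprodI.Word fun _ : ι => M) :
    (mapWord f hf w).prod = reindex f w.prod := by
  simp only [CoprodI.Word.prod, mapWord, map_list_prod, List.map_map]
  congr 1

theorem fstIdx_mapWord (f : ι → κ) (hf : f.Injective) (w : CoprodI.Word fun _ : ι => M) :
    (mapWord f hf w).fstIdx = w.fstIdx.map f := by
  simp [CoprodI.Word.fstIdx, mapWord, Function.comp_def, Sigma.map]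

theorem eq_one_of_reindex_eq_self {f : ι → ι} (hf : f.Injective) (hfix : ∀ i, f i ≠ i)
    {n : FreePower ι M} (hn : reindex f n = n) : n = 1 := by
  classical
  obtain ⟨w, rfl⟩ := CoprodI.Word.equiv.symm.surjective n
  have hw : mapWord f hf w = w :=
    CoprodI.Word.equiv.symm.injective ((prod_mapWord f hf w).trans hn)
  have hidx : w.fstIdx.map f = w.fstIdx := by
    rw [← fstIdx_mapWord f hf, hw]
  induction w using CoprodI.Word.consRecOn with
  | empty => rfl
  | cons i m w hi hm => exact absurd (by simpa using hidx) (hfix i)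

/-- The symmetric group of the index set acting on a free power by permuting the factors. -/
def permAut : Equiv.Perm ι →* MulAut (FreePower ι M) where
  toFun σ := (reindex σ).toMulEquiv (reindex σ.symm)
    (by rw [← reindex_comp, σ.symm_comp_self, reindex_id])
    (by rw [← reindex_comp, σ.self_comp_symm, reindex_id])
  map_one' := MulEquiv.ext fun n => DFunLike.congr_fun reindex_id n
  map_mul' σ τ := MulEquiv.ext fun n => DFunLike.congr_fun (reindex_comp σ τ) n

theorem permAut_apply_eq_self_iff {σ : Equiv.Perm ι} (hσ : ∀ i, σ i ≠ i) {n : FreePower ι M} :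
    permAut σ n = n ↔ n = 1 :=
  ⟨eq_one_of_reindex_eq_self σ.injective hσ, by rintro rfl; exact map_one _⟩

end Monoid

section Group

variable (H K : Type*) [Group H] [Group K]

/-- The action of `H` on the free power of `K` indexed by `H`, by left translation of the index. -/
def translationAut : H →* MulAut (FreePower H K) :=
  permAut.comp (MulAction.toPermHom H H)

variable {H K}

@[simp]
theorem translationAut_of (h i : H) (k : K) : translationAut H K h (of i k) = of (h * i) k :=
  reindex_of _ i k

theorem commute_permAut_mulRight_translationAut (δ h : H) :
    Commute (permAut (Equiv.mulRight δ)) (translationAut H K h) := by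
  refine Commute.map (f := permAut) (Equiv.ext fun i => ?_)
  exact mul_assoc h i δ

variable (H K) in
/-- The homomorphism identifying the free power with the kernel of `H ∗ K → H`: the factor with
index `h` is sent to the conjugate `h K h⁻¹`. -/
def toCoprod : FreePower H K →* H ∗ K :=
  CoprodI.lift fun h => (MulAut.conj (inl h : H ∗ K)).toMonoidHom.comp inr

@[simp]
theorem toCoprod_of (h : H) (k : K) : toCoprod H K (of h k) = inl h * inr k * (inl h)⁻¹ :=
  CoprodI.lift_of (M := fun _ : H => K) _ k

theorem toCoprod_comp_translationAut (h : H) :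
    (toCoprod H K).comp (translationAut H K h).toMonoidHom =
      (MulAut.conj (inl h)).toMonoidHom.comp (toCoprod H K) := by
  ext i k
  simp [mul_assoc]

end Group

end FreePower

section SemidirectProduct

variable {N G : Type*} [Group N] [Group G] {φ : G →* MulAut N}

theorem mem_range_semidirectProduct_inr_iff {x : N ⋊[φ] G} :
    x ∈ (SemidirectProduct.inr : G →* N ⋊[φ] G).range ↔ x.left = 1 := by
  constructor
  · rintro ⟨g, rfl⟩
    rfl
  · intro hx
    exact ⟨x.right, SemidirectProduct.ext hx.symm rfl⟩

theorem exists_semidirectProduct_aut_fixing_exactly_range_inr {σ : MulAut N}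
    (hcomm : ∀ g, Commute σ (φ g)) (hfix : ∀ n, σ n = n ↔ n = 1) :
    ∃ Ψ : MulAut (N ⋊[φ] G), ∀ x, Ψ x = x ↔ x ∈ (SemidirectProduct.inr : G →* N ⋊[φ] G).range := by
  refine ⟨SemidirectProduct.congr σ (MulEquiv.refl G) fun g => (hcomm g).eq, fun x => ?_⟩
  rw [mem_range_semidirectProduct_inr_iff, ← hfix]
  exact SemidirectProduct.ext_iff.trans (and_iff_left rfl)

end SemidirectProduct

section Coprod

open FreePower

variable (H K : Type*) [Group H] [Group K]

/-- The decomposition of `H ∗ K` as the semidirect product of the kernel of `H ∗ K → H`, which is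
a free power of `K`, with `H`. -/
def coprodEquivSemidirectProduct : H ∗ K ≃* FreePower H K ⋊[translationAut H K] H :=
  MonoidHom.toMulEquiv
    (lift SemidirectProduct.inr (SemidirectProduct.inl.comp (of 1)))
    (SemidirectProduct.lift (toCoprod H K) inl toCoprod_comp_translationAut)
    (by ext <;> simp)
    (by
      refine SemidirectProduct.hom_ext (CoprodI.ext_hom _ _ fun h => ?_) ?_
      · ext1 k
        simp [← map_inv, ← SemidirectProduct.inl_aut]
      · ext1 h
        simp)

variable {H K}

theorem coprodEquivSemidirectProduct_inl (h : H) :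
    coprodEquivSemidirectProduct H K (inl h) = SemidirectProduct.inr h :=
  lift_apply_inl SemidirectProduct.inr (SemidirectProduct.inl.comp (of 1)) h

theorem coprodEquivSemidirectProduct_mem_range_inr_iff {x : H ∗ K} :
    coprodEquivSemidirectProduct H K x ∈
        (SemidirectProduct.inr : H →* FreePower H K ⋊[translationAut H K] H).range ↔
      x ∈ (inl : H →* H ∗ K).range := by
  simp only [MonoidHom.mem_range, ← coprodEquivSemidirectProduct_inl, EmbeddingLike.apply_eq_iff_eq]

end Coprod

/-- Lemma 4.1: if `H` is a nontrivial group and `Λ = H ∗ K` is the free product of `H`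
and `K`, then there is an automorphism of `Λ` whose fixed-point set is exactly the image
of `H`. -/
theorem free_product_aut_fixing_exactly_left_factor
    (H K : Type*) [Group H] [Group K] (hH : ∃ δ : H, δ ≠ 1) :
    ∃ ψ : (H ∗ K) ≃* (H ∗ K),
      ∀ x : H ∗ K, ψ x = x ↔ x ∈ (Coprod.inl : H →* H ∗ K).range := by
  obtain ⟨δ, hδ⟩ := hH
  have hmoves : ∀ h : H, Equiv.mulRight δ h ≠ h := fun h => by simpa using hδ
  obtain ⟨Ψ, hΨ⟩ := exists_semidirectProduct_aut_fixing_exactly_range_inr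
    (FreePower.commute_permAut_mulRight_translationAut (K := K) δ)
    fun _ => FreePower.permAut_apply_eq_self_iff hmoves
  let e := coprodEquivSemidirectProduct H K
  refine ⟨(e.trans Ψ).trans e.symm, fun x => ?_⟩
  calc e.symm (Ψ (e x)) = x
      ↔ Ψ (e x) = e x := e.symm_apply_eq
    _ ↔ e x ∈ SemidirectProduct.inr.range := hΨ (e x)
    _ ↔ x ∈ (inl : H →* H ∗ K).range := coprodEquivSemidirectProduct_mem_range_inr_iff
end

section
/- Let H and K be groups, let Λ = H ∗ K be their free product with canonical inclusions inl : H → Λ and inr : K → Λ, and let δ ∈ H with δ ≠ 1. Let ψ : Λ → Λ be the homomorphism determined by ψ(inl h) = inl h for all h ∈ H and ψ(inr k) = (inl δ) · (inr k) · (inl δ)⁻¹ for all k ∈ K. Then ψ is an automorphism of Λ, and for every x ∈ Λ, ψ(x) = x if and only if x lies in the range of inl. -/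
open Monoid Monoid.Coprod

/-!
In a free product of groups `G i`, let `headAt i x : G i` be the first letter of the reduced word
of `x` if that letter lies in `G i`, and `1` otherwise. Up to a letterwise automorphism, the twist
by `δ : G i` is conjugation by `δ`, and it follows that it multiplies `headAt i` by `δ` on the
right at every `x` outside the factor `G i`. So for `δ ≠ 1` no such `x` is fixed.
-/

section Head

open CoprodI (of)

variable {ι : Type*} [DecidableEq ι] {M N : ι → Type*} [∀ i, Monoid (M i)] [∀ i, Monoid (N i)]
  [∀ i, DecidableEq (M i)] [∀ i, DecidableEq (N i)]

/-- The first letter of the reduced word of `x` if it belongs to the factor `M i`, and `1` if the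
word is empty or starts in another factor. -/
def headAt (i : ι) (x : CoprodI M) : M i :=
  (CoprodI.Word.equivPair i (CoprodI.Word.equiv x)).head

theorem headAt_eq_one_iff {i : ι} {x : CoprodI M} :
    headAt i x = 1 ↔ (CoprodI.Word.equiv x).fstIdx ≠ some i := by
  refine ⟨fun h => ?_, fun h => by rw [headAt, CoprodI.Word.equivPair_eq_of_fstIdx_ne h]⟩
  have h_tail := CoprodI.Word.equivPair_head_smul_equivPair_tail (i := i) (CoprodI.Word.equiv x)
  rw [← headAt, h, map_one, one_smul] at h_tail
  exact h_tail ▸ (CoprodI.Word.equivPair i (CoprodI.Word.equiv x)).fstIdx_ne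

theorem headAt_one (i : ι) : headAt i (1 : CoprodI M) = 1 :=
  headAt_eq_one_iff.2 (by simp [CoprodI.Word.equiv, CoprodI.Word.fstIdx])

theorem word_equiv_of_mul {i : ι} (m : M i) (x : CoprodI M) :
    CoprodI.Word.equiv (of m * x) = of m • CoprodI.Word.equiv x :=
  mul_smul (of m) x (CoprodI.Word.empty (M := M))

theorem headAt_of_mul_same {i : ι} (m : M i) (x : CoprodI M) :
    headAt i (of m * x) = m * headAt i x := by
  rw [headAt, word_equiv_of_mul, CoprodI.Word.equivPair_smul_same, headAt]

theorem headAt_of_mul_of_ne {i j : ι} (hij : i ≠ j) {m : M j} (hm : m ≠ 1) {x : CoprodI M}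
    (hx : headAt j x = 1) : headAt i (of m * x) = 1 := by
  rw [headAt_eq_one_iff, word_equiv_of_mul,
    ← CoprodI.Word.cons_eq_smul (h1 := headAt_eq_one_iff.1 hx) (h2 := hm),
    CoprodI.Word.fstIdx_cons]
  simpa using hij.symm

theorem headAt_of_of_ne {i j : ι} (hij : i ≠ j) (m : M j) : headAt i (of m : CoprodI M) = 1 := by
  by_cases hm : m = 1
  · rw [hm, map_one, headAt_one]
  · rw [← mul_one (of m), headAt_of_mul_of_ne hij hm (headAt_one j)]

@[elab_as_elim]
theorem reduced_induction {motive : CoprodI M → Prop} (x : CoprodI M) (one : motive 1)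
    (of_mul : ∀ (i : ι) (m : M i) (x : CoprodI M), m ≠ 1 → headAt i x = 1 → motive x →
      motive (of m * x)) : motive x := by
  rw [← CoprodI.Word.equiv.symm_apply_apply x]
  induction CoprodI.Word.equiv x using CoprodI.Word.consRecOn with
  | empty => exact one
  | cons i m w hw hm ih =>
    have h_head : headAt i w.prod = 1 :=
      headAt_eq_one_iff.2 (by rwa [← CoprodI.Word.equiv.apply_symm_apply w] at hw)
    change motive (CoprodI.Word.cons m w hw hm).prod
    rw [CoprodI.Word.prod_cons]
    exact of_mul i m w.prod hm h_head ih

theorem headAt_of_mul_congr {i j : ι} {m : M j} (hm : m ≠ 1) {x y : CoprodI M}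
    (hx : headAt j x = 1) (hy : headAt j y = 1) :
    headAt i (of m * x) = headAt i (of m * y) := by
  obtain rfl | hij := eq_or_ne i j
  · rw [headAt_of_mul_same, headAt_of_mul_same, hx, hy]
  · rw [headAt_of_mul_of_ne hij hm hx, headAt_of_mul_of_ne hij hm hy]

theorem headAt_mul_of {j : ι} (g : M j) {x : CoprodI M}
    (hx : x ∉ Set.range (of : M j →* CoprodI M)) (i : ι) :
    headAt i (x * of g) = headAt i x := by
  induction x using reduced_induction generalizing i with
  | one => exact absurd ⟨1, map_one _⟩ hx
  | of_mul k m x hm h_head ih =>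
    suffices h_head_mul : headAt k (x * of g) = 1 by
      rw [mul_assoc, headAt_of_mul_congr hm h_head_mul h_head]
    by_cases hxj : x ∈ Set.range (of : M j →* CoprodI M)
    · obtain ⟨h, rfl⟩ := hxj
      have hkj : k ≠ j := by
        rintro rfl
        exact hx ⟨m * h, map_mul _ _ _⟩
      rw [← map_mul, headAt_of_of_ne hkj]
    · rw [ih hxj, h_head]

/-- The homomorphism of free products applying `f i` to each letter from `M i`; the indexed
analogue of `Monoid.Coprod.map`. -/
def mapCoprodI (f : ∀ i, M i →* N i) : CoprodI M →* CoprodI N :=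
  CoprodI.lift fun i => of.comp (f i)

theorem headAt_mapCoprodI {f : ∀ i, M i →* N i} (hf : ∀ i, Function.Injective (f i)) (i : ι)
    (x : CoprodI M) : headAt i (mapCoprodI f x) = f i (headAt i x) := by
  induction x using reduced_induction generalizing i with
  | one => simp only [map_one, headAt_one]
  | of_mul k m x hm h_head ih =>
    have h_map : mapCoprodI f (of m * x) = of (f k m) * mapCoprodI f x := by simp [mapCoprodI]
    rw [h_map]
    obtain rfl | hik := eq_or_ne i k
    · rw [headAt_of_mul_same, headAt_of_mul_same, ih, map_mul]
    · have h_letter : f k m ≠ 1 := (map_ne_one_iff (f k) (hf k)).2 hm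
      have h_head_map : headAt k (mapCoprodI f x) = 1 := by rw [ih, h_head, map_one]
      rw [headAt_of_mul_of_ne hik h_letter h_head_map, headAt_of_mul_of_ne hik hm h_head, map_one]

end Head

section IndexedTwist

open CoprodI (of)

variable {ι : Type*} [DecidableEq ι] {G : ι → Type*} [∀ i, Group (G i)]

/-- The endomorphism of the free product of the `G k` that is the identity on `G i` and
conjugation by `δ : G i` on every other factor. -/
def conjTwist (i : ι) (δ : G i) : CoprodI G →* CoprodI G :=
  CoprodI.lift fun k => if k = i then of else (MulAut.conj (of δ)).toMonoidHom.comp of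

theorem conjTwist_of_same {i : ι} (δ g : G i) : conjTwist i δ (of g) = of g := by
  simp [conjTwist]

/-- The family of automorphisms of the factors that is conjugation by `δ` on `G i` and the
identity elsewhere. -/
def conjAt (i : ι) (δ : G i) : ∀ k, MulAut (G k) :=
  Pi.mulSingle i (MulAut.conj δ)

theorem conjTwist_apply {i : ι} (δ : G i) (x : CoprodI G) :
    conjTwist i δ x =
      mapCoprodI (fun k => (conjAt i δ⁻¹ k).toMonoidHom) (of δ * x * (of δ)⁻¹) := by
  have h_comp : conjTwist i δ = (mapCoprodI fun k => (conjAt i δ⁻¹ k).toMonoidHom).comp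
      (MulAut.conj (of δ)).toMonoidHom := by
    ext k g
    obtain rfl | hki := eq_or_ne k i
    · simp [conjTwist, mapCoprodI, conjAt, mul_assoc]
    · simp [conjTwist, mapCoprodI, conjAt, hki]
  exact DFunLike.congr_fun h_comp x

theorem headAt_conjTwist [∀ i, DecidableEq (G i)] {i : ι} (δ : G i) {x : CoprodI G}
    (hx : x ∉ Set.range (of : G i →* CoprodI G)) :
    headAt i (conjTwist i δ x) = headAt i x * δ := by
  rw [conjTwist_apply, headAt_mapCoprodI (fun k => MulEquiv.injective _), mul_assoc,
    headAt_of_mul_same, ← map_inv, headAt_mul_of _ hx]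
  simp [conjAt]

theorem conjTwist_eq_self_iff {i : ι} {δ : G i} (hδ : δ ≠ 1) {x : CoprodI G} :
    conjTwist i δ x = x ↔ x ∈ (of : G i →* CoprodI G).range := by
  classical
  refine ⟨fun h_fixed => ?_, ?_⟩
  · by_contra hx
    have h_head : headAt i x = headAt i x * δ := by rw [← headAt_conjTwist δ hx, h_fixed]
    exact hδ (left_eq_mul.1 h_head)
  · rintro ⟨g, rfl⟩
    exact conjTwist_of_same δ g

end IndexedTwist

section BinaryTwist

variable {H K : Type*} [Group H] [Group K]

/-- The endomorphism of `H ∗ K` that is the identity on `H` and conjugation by `δ : H` on `K`. -/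
def coprodConjTwist (K : Type*) [Group K] (δ : H) : H ∗ K →* H ∗ K :=
  Coprod.lift inl ((MulAut.conj (inl δ)).toMonoidHom.comp inr)

theorem coprodConjTwist_inl (δ h : H) : coprodConjTwist K δ (inl h) = inl h := by
  simp [coprodConjTwist]

theorem coprodConjTwist_bijective (δ : H) : Function.Bijective (coprodConjTwist K δ) := by
  let e : H ∗ K ≃* H ∗ K :=
    (MulAut.conj (inl δ)).trans (MulEquiv.coprodCongr (MulAut.conj δ⁻¹) (MulEquiv.refl K))
  have he : coprodConjTwist K δ = e.toMonoidHom := by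
    ext <;> simp [coprodConjTwist, e, mul_assoc]
  exact he ▸ e.bijective

/-- The embedding of `H ∗ K` into a free product over `Bool`. Both factors are `H × K`, so that
`H` and `K` may live in different universes. -/
def toCoprodI (H K : Type*) [Group H] [Group K] : H ∗ K →* CoprodI fun _ : Bool => H × K :=
  Coprod.lift ((CoprodI.of (i := true)).comp (MonoidHom.inl H K))
    ((CoprodI.of (i := false)).comp (MonoidHom.inr H K))

/-- The retraction of `toCoprodI` that projects the first factor to `H` and the second to `K`. -/
def ofCoprodI (H K : Type*) [Group H] [Group K] : (CoprodI fun _ : Bool => H × K) →* H ∗ K :=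
  CoprodI.lift fun b =>
    cond b (inl.comp (MonoidHom.fst H K)) (inr.comp (MonoidHom.snd H K))

theorem ofCoprodI_toCoprodI (x : H ∗ K) : ofCoprodI H K (toCoprodI H K x) = x := by
  have h_comp : (ofCoprodI H K).comp (toCoprodI H K) = MonoidHom.id _ := by
    ext <;> simp [ofCoprodI, toCoprodI]
  exact DFunLike.congr_fun h_comp x

theorem mem_range_inl_of_toCoprodI_mem_range {x : H ∗ K}
    (hx : toCoprodI H K x ∈
      (CoprodI.of (M := fun _ : Bool => H × K) (i := true)).range) :
    x ∈ (inl : H →* H ∗ K).range := by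
  obtain ⟨p, hp⟩ := hx
  exact ⟨p.1, by rw [← ofCoprodI_toCoprodI x, ← hp]; simp [ofCoprodI]⟩

theorem toCoprodI_coprodConjTwist (δ : H) (x : H ∗ K) :
    toCoprodI H K (coprodConjTwist K δ x) =
      conjTwist (G := fun _ : Bool => H × K) true (δ, 1) (toCoprodI H K x) := by
  have h_comp : (toCoprodI H K).comp (coprodConjTwist K δ) =
      (conjTwist (G := fun _ : Bool => H × K) true (δ, 1)).comp (toCoprodI H K) := by
    ext <;> simp [toCoprodI, coprodConjTwist, conjTwist]
  exact DFunLike.congr_fun h_comp x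

theorem coprodConjTwist_eq_self_iff {δ : H} (hδ : δ ≠ 1) {x : H ∗ K} :
    coprodConjTwist K δ x = x ↔ x ∈ (inl : H →* H ∗ K).range := by
  refine ⟨fun h_fixed => mem_range_inl_of_toCoprodI_mem_range ?_, ?_⟩
  · have hδ_pair : ((δ, 1) : H × K) ≠ 1 := by simpa using hδ
    rw [← conjTwist_eq_self_iff (G := fun _ : Bool => H × K) hδ_pair,
      ← toCoprodI_coprodConjTwist, h_fixed]
  · rintro ⟨h, rfl⟩
    exact coprodConjTwist_inl δ h

end BinaryTwist

/-- Lemma 4.1 (explicit form): given `δ ≠ 1` in `H`, the endomorphism `ψ` of the free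
product `H ∗ K` that is the identity on `H` and conjugation by `δ` on `K` is an
automorphism whose fixed-point set is exactly the image of `H`. -/
theorem free_product_conj_twist_is_aut_fixing_exactly_left_factor
    (H K : Type*) [Group H] [Group K] (δ : H) (hδ : δ ≠ 1) :
    Function.Bijective
      (Coprod.lift (Coprod.inl : H →* H ∗ K)
        ((MulAut.conj ((Coprod.inl : H →* H ∗ K) δ)).toMonoidHom.comp
          (Coprod.inr : K →* H ∗ K))) ∧
    ∀ x : H ∗ K,
      Coprod.lift (Coprod.inl : H →* H ∗ K)
        ((MulAut.conj ((Coprod.inl : H →* H ∗ K) δ)).toMonoidHom.comp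
          (Coprod.inr : K →* H ∗ K)) x = x ↔
      x ∈ (Coprod.inl : H →* H ∗ K).range := by
  exact ⟨coprodConjTwist_bijective δ, fun _ => coprodConjTwist_eq_self_iff hδ⟩
end

section
/- Let n ≥ 1, let Γ be a finitely generated subgroup of GL(n, ℂ), and let 𝒫 be a set of polynomials in the n² matrix-entry variables with complex coefficients such that every coefficient of every P ∈ 𝒫 is algebraic over ℚ. Let Δ₀ = {γ ∈ Γ : P(γ) = 0 for all P ∈ 𝒫}, and assume Δ₀ is a subgroup of Γ. Then Δ₀ is separable in Γ: for every γ ∈ Γ with γ ∉ Δ₀ there exist a finite group Q and a homomorphism φ : Γ → Q such that φ(γ) ∉ φ(Δ₀). -/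
/-!
A finitely generated matrix group and any one polynomial `P` in the matrix entries are already
defined over a finitely generated subring `R`. If `P(γ) ≠ 0`, residual finiteness of `R` provides
an ideal `I` of finite index with `P(γ) ∉ I`. Reducing matrices modulo `I` maps the group to a
finite group, and no zero of `P` has the same image as `γ`, since the reduction of `P` takes the
value `0` at the former and not at the latter.
-/

universe u v

theorem isJacobsonRing_of_dimensionLEOne {R : Type*} [CommRing R] [Ring.DimensionLEOne R]
    (hR : Ideal.jacobson (⊥ : Ideal R) = ⊥) : IsJacobsonRing R := by
  rw [isJacobsonRing_iff_prime_eq]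
  intro P hP
  rcases eq_or_ne P ⊥ with rfl | hP_ne_bot
  · exact hR
  · have : P.IsMaximal := hP.isMaximal hP_ne_bot
    exact Ideal.jacobson_eq_self_of_isMaximal

theorem jacobson_bot_int : Ideal.jacobson (⊥ : Ideal ℤ) = ⊥ := by
  rw [eq_bot_iff]
  intro x hx
  have h_unit : IsUnit (x * x + 1) := Ideal.mem_jacobson_bot.1 hx x
  rw [Ideal.mem_bot]
  rcases Int.isUnit_iff.1 h_unit with h | h <;> nlinarith

theorem finite_of_field_of_finiteType_int {K : Type*} [Field K]
    (hK : Algebra.FiniteType ℤ K) : Finite K := by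
  have : IsJacobsonRing ℤ := isJacobsonRing_of_dimensionLEOne jacobson_bot_int
  have : Module.Finite ℤ K := finite_of_finite_type_of_isJacobsonRing ℤ K
  rcases CharP.exists' K with _ | ⟨p, hp, _⟩
  · exact absurd (isField_of_isIntegral_of_isField (algebraMap ℤ K).injective_int
      (Field.toIsField K)) Int.not_isField
  · have h_torsion : Module.IsTorsion ℤ K := fun {x} =>
      ⟨⟨p, by simpa using hp.out.ne_zero⟩, by simp [Submonoid.smul_def]⟩
    exact Module.finite_of_fg_torsion K h_torsion

theorem exists_isMaximal_notMem_pow {R : Type*} [CommRing R] [IsNoetherianRing R] {x : R}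
    (hx : x ≠ 0) : ∃ m : Ideal R, m.IsMaximal ∧ ∃ k : ℕ, x ∉ m ^ k := by
  have h_ann : (Ideal.span {x}).annihilator ≠ ⊤ := by
    simpa [Submodule.annihilator_eq_top_iff] using hx
  obtain ⟨m, hm, h_ann_le⟩ := Ideal.exists_le_maximal _ h_ann
  refine ⟨m, hm, ?_⟩
  by_contra! h_mem
  -- By Krull's intersection theorem `r * x = x` for some `r ∈ m`, so `1 - r` annihilates `x`.
  obtain ⟨r, hr⟩ := (m.mem_iInf_smul_pow_eq_bot_iff x).1 (by simpa using h_mem)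
  have h_one_sub : 1 - (r : R) ∈ m :=
    h_ann_le (Submodule.mem_annihilator_span_singleton x _ |>.2 (by
      rw [sub_smul, one_smul, hr, sub_self]))
  exact hm.ne_top (m.eq_top_iff_one.2 (by simpa using m.add_mem h_one_sub r.2))

theorem exists_finite_quotient_notMem {R : Type*} [CommRing R] [Algebra.FiniteType ℤ R] {x : R}
    (hx : x ≠ 0) : ∃ I : Ideal R, Finite (R ⧸ I) ∧ x ∉ I := by
  have : IsNoetherianRing R := Algebra.FiniteType.isNoetherianRing ℤ R
  obtain ⟨m, hm, k, hk⟩ := exists_isMaximal_notMem_pow hx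
  let _ : Field (R ⧸ m) := Ideal.Quotient.field m
  have h_finiteType : Algebra.FiniteType ℤ (R ⧸ m) :=
    .of_surjective (Ideal.Quotient.mkₐ ℤ m) (Ideal.Quotient.mkₐ_surjective ℤ m)
  have : Finite (R ⧸ m) := finite_of_field_of_finiteType_int h_finiteType
  exact ⟨m ^ k, Ideal.finite_quotient_pow (IsNoetherian.noetherian m) k, hk⟩

section MatrixRepresentations

variable {M n A : Type*}

/-- Evaluation of a polynomial in the matrix-entry variables at a square matrix, over an arbitrary
commutative semiring; over `ℂ` and on invertible matrices this is `evalAtGL`. -/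
noncomputable def evalEntries [CommSemiring A] (B : Matrix n n A)
    (P : MvPolynomial (n × n) A) : A :=
  MvPolynomial.eval (fun p => B p.1 p.2) P

theorem evalEntries_map [CommSemiring A] {A' : Type*} [CommSemiring A'] (f : A →+* A')
    (B : Matrix n n A) (P : MvPolynomial (n × n) A) :
    evalEntries (B.map f) (MvPolynomial.map f P) = f (evalEntries B P) := by
  rw [evalEntries, evalEntries, MvPolynomial.eval_map, ← MvPolynomial.eval₂_id,
    MvPolynomial.hom_eval₂, RingHom.comp_id]
  rfl

variable [Monoid M] [Fintype n] [DecidableEq n] [CommRing A]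

theorem exists_fg_subalgebra_entries_mem [Monoid.FG M] (ρ : M →* Matrix n n A) (T : Finset A) :
    ∃ R : Subalgebra ℤ A, R.FG ∧ ↑T ⊆ (R : Set A) ∧ ∀ g i j, ρ g i j ∈ R := by
  classical
  obtain ⟨S, hS⟩ := Monoid.fg_def.1 ‹Monoid.FG M›
  let entries : Finset A :=
    (S ×ˢ (Finset.univ : Finset (n × n))).image fun s => ρ s.1 s.2.1 s.2.2
  let R := Algebra.adjoin ℤ ((T ∪ entries : Finset A) : Set A)
  have h_subset : ((T ∪ entries : Finset A) : Set A) ⊆ R := Algebra.subset_adjoin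
  have h_closure : Submonoid.closure S ≤ (R.matrix (n := n)).toSubmonoid.comap ρ := by
    rw [Submonoid.closure_le]
    intro s hs i j
    exact h_subset (Finset.mem_union_right _
      (Finset.mem_image.2 ⟨(s, i, j), by simpa using hs, rfl⟩))
  exact ⟨R, Subalgebra.fg_adjoin_finset _,
    fun t ht => h_subset (Finset.mem_union_left _ ht),
    fun g => h_closure (hS ▸ Submonoid.mem_top g)⟩

theorem exists_monoidHom_matrix_map_eq (R : Subalgebra ℤ A) (ρ : M →* Matrix n n A)
    (hρ : ∀ g i j, ρ g i j ∈ R) :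
    ∃ ψ : M →* Matrix n n R, ∀ g, (ψ g).map (algebraMap R A) = ρ g := by
  let restrict (g : M) : Matrix n n R := .of fun i j => ⟨ρ g i j, hρ g i j⟩
  have h_restrict (g : M) : (algebraMap R A).mapMatrix (restrict g) = ρ g := rfl
  have h_inj : Function.Injective ((algebraMap R A).mapMatrix (m := n)) :=
    Matrix.map_injective Subtype.val_injective
  exact ⟨{
    toFun := restrict
    map_one' := h_inj (by rw [h_restrict, map_one, map_one])
    map_mul' := fun g h => h_inj (by simp only [h_restrict, map_mul]) }, h_restrict⟩

theorem exists_finiteType_descent [Monoid.FG M] (ρ : M →* Matrix n n A)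
    (P : MvPolynomial (n × n) A) :
    ∃ R : Subalgebra ℤ A, Algebra.FiniteType ℤ R ∧
      ∃ (ψ : M →* Matrix n n R) (P' : MvPolynomial (n × n) R),
        ∀ g, algebraMap R A (evalEntries (ψ g) P') = evalEntries (ρ g) P := by
  classical
  obtain ⟨R, hR, h_coeffs, h_entries⟩ := exists_fg_subalgebra_entries_mem ρ P.coeffs
  obtain ⟨ψ, hψ⟩ := exists_monoidHom_matrix_map_eq R ρ h_entries
  obtain ⟨P', hP'⟩ : P ∈ Set.range (MvPolynomial.map (algebraMap R A)) :=
    MvPolynomial.mem_range_map_iff_coeffs_subset.2 fun c hc => ⟨⟨c, h_coeffs hc⟩, rfl⟩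
  exact ⟨R, R.fg_iff_finiteType.1 hR, ψ, P', fun g => by rw [← evalEntries_map, hψ, hP']⟩

end MatrixRepresentations

theorem exists_finite_reduction_evalEntries_ne_zero {M n : Type*} {A : Type v} [Monoid M]
    [Monoid.FG M] [Fintype n] [DecidableEq n] [CommRing A] (ρ : M →* Matrix n n A)
    {P : MvPolynomial (n × n) A} {g : M} (hg : evalEntries (ρ g) P ≠ 0) :
    ∃ (F : Type v) (_ : CommRing F) (_ : Finite F) (φ : M →* Matrix n n F),
      ∀ h, φ h = φ g → evalEntries (ρ h) P ≠ 0 := by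
  obtain ⟨R, _, ψ, P', h_eval⟩ := exists_finiteType_descent ρ P
  have h_ne_zero : evalEntries (ψ g) P' ≠ 0 := fun h => hg (by rw [← h_eval, h, map_zero])
  obtain ⟨I, hI, h_notMem⟩ := exists_finite_quotient_notMem h_ne_zero
  let q := Ideal.Quotient.mk I
  refine ⟨R ⧸ I, inferInstance, hI, q.mapMatrix.toMonoidHom.comp ψ, fun h h_eq h_zero => ?_⟩
  have h_map_eq : (ψ h).map q = (ψ g).map q := h_eq
  have h_zero' : evalEntries (ψ h) P' = 0 :=
    Subtype.val_injective ((h_eval h).trans h_zero)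
  have h_reduction : q (evalEntries (ψ g) P') = 0 := by
    rw [← evalEntries_map, ← h_map_eq, evalEntries_map, h_zero', map_zero]
  exact h_notMem (Ideal.Quotient.eq_zero_iff_mem.1 h_reduction)

theorem qbar_defined_subgroup_separable_general {G : Type*} {n : Type u} {A : Type v} [Group G]
    [Group.FG G] [Fintype n] [DecidableEq n] [CommRing A] (ρ : G →* GL n A)
    (Ps : Set (MvPolynomial (n × n) A)) {Z : Set G}
    (hZ : ∀ g, g ∈ Z ↔ ∀ P ∈ Ps, evalEntries (ρ g : Matrix n n A) P = 0) {g : G} (hg : g ∉ Z) :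
    ∃ (Q : Type (max u v)) (_ : Group Q) (_ : Fintype Q) (φ : G →* Q), φ g ∉ φ '' Z := by
  obtain ⟨P, hP, h_ne_zero⟩ : ∃ P ∈ Ps, evalEntries (ρ g : Matrix n n A) P ≠ 0 := by
    simpa [hZ] using hg
  obtain ⟨F, _, _, φ, hφ⟩ :=
    exists_finite_reduction_evalEntries_ne_zero ((Units.coeHom _).comp ρ) h_ne_zero
  refine ⟨GL n F, inferInstance, Fintype.ofFinite _, φ.toHomUnits, ?_⟩
  rintro ⟨h, hhZ, h_eq⟩
  exact hφ h (congrArg Units.val h_eq) ((hZ h).1 hhZ P hP)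

/-- Lemma 5.1 (specialized to `GL(n,ℂ)`): if `Γ ≤ GL(n,ℂ)` is finitely generated and
`Δ₀` is the subgroup of `Γ` cut out by a set of polynomials with coefficients algebraic
over `ℚ`, then `Δ₀` is separable in `Γ`. -/
theorem qbar_defined_subgroup_separable (n : ℕ) (hn : 1 ≤ n)
    (Γ : Subgroup (GL (Fin n) ℂ)) (hΓ : Γ.FG)
    (Ps : Set (MvPolynomial (Fin n × Fin n) ℂ))
    (halg : ∀ P ∈ Ps, ∀ m : (Fin n × Fin n) →₀ ℕ, IsAlgebraic ℚ (MvPolynomial.coeff m P))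
    (Δ₀ : Subgroup Γ)
    (hΔ₀ : ∀ γ : Γ, γ ∈ Δ₀ ↔ ∀ P ∈ Ps, evalAtGL (γ : GL (Fin n) ℂ) P = 0) :
    ∀ γ : Γ, γ ∉ Δ₀ →
      ∃ (Q : Type) (_ : Group Q) (_ : Fintype Q) (φ : Γ →* Q),
        φ γ ∉ Δ₀.map φ := by
  have : Group.FG Γ := (Group.fg_iff_subgroup_fg Γ).2 hΓ
  exact fun γ hγ => qbar_defined_subgroup_separable_general Γ.subtype Ps hΔ₀ hγ
end
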